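/- arXiv:1804.11033 — 3 statements merged into one kernel-verified Lean document; each statement's English description precedes it below -/
import Mathlib

section
/- Let p = (f₁ ≤ … ≤ f_N) and q = (g₁ ≤ … ≤ g_M) be vertex patterns (nondecreasing sequences of integers ≥ 3) with p ≤_emb q, and let a ∈ [0, 2π/g_M]. Then K_a(p) ≥ K_a(q). If moreover p <_emb q (i.e. M > N, or fᵢ < g_{jᵢ} for some index of the embedding), then K_a(p) > K_a(q). -/
/-- The angle defect `K_a(p) = 2π − Σᵢ 2·arcsin(cos(π/fᵢ)/cos(a/2))` of a vertex
pattern given by `f : Fin N → ℕ`. -/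
noncomputable def Kf {N : ℕ} (f : Fin N → ℕ) (a : ℝ) : ℝ :=
  2 * Real.pi - ∑ i, 2 * Real.arcsin (Real.cos (Real.pi / (f i : ℝ)) / Real.cos (a / 2))

/-!
Each summand `2·arcsin(cos(π/x)/cos(a/2))` is the interior angle of the regular spherical `x`-gon
with edges of length `a`, and `a ≤ 2π/x` says that such a polygon exists, i.e. that
`cos(π/x) ≤ cos(a/2)`. On this range the angle is positive and strictly increasing in `x`.
An embedding of patterns replaces polygons by polygons with at least as many sides and adds further
ones, so it can only increase the angle sum.
-/

section EmbeddingSums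

variable {ι κ R : Type*} [Fintype ι] [Fintype κ] [AddCommMonoid R] [PartialOrder R]
  {u : ι → R} {v : κ → R}

theorem sum_le_sum_of_embedding [IsOrderedAddMonoid R] (j : ι ↪ κ)
    (hv : ∀ k ∉ Set.range j, 0 ≤ v k) (huv : ∀ i, u i ≤ v (j i)) :
    ∑ i, u i ≤ ∑ k, v k :=
  calc ∑ i, u i ≤ ∑ i, v (j i) := Finset.sum_le_sum fun i _ ↦ huv i
    _ = ∑ k ∈ Finset.univ.map j, v k := (Finset.sum_map _ j v).symm
    _ ≤ ∑ k, v k := Finset.sum_le_sum_of_subset_of_nonneg (Finset.subset_univ _)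
        fun k _ hk ↦ hv k (by simpa using hk)

theorem sum_lt_sum_of_embedding [IsOrderedCancelAddMonoid R] (j : ι ↪ κ)
    (hv : ∀ k ∉ Set.range j, 0 < v k) (huv : ∀ i, u i ≤ v (j i))
    (hstrict : ¬ Function.Surjective j ∨ ∃ i, u i < v (j i)) :
    ∑ i, u i < ∑ k, v k := by
  rcases hstrict with hsurj | ⟨i, hi⟩
  · obtain ⟨k, hk⟩ : ∃ k, k ∉ Set.range j := not_forall.mp hsurj
    calc ∑ i, u i ≤ ∑ i, v (j i) := Finset.sum_le_sum fun i _ ↦ huv i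
      _ = ∑ k ∈ Finset.univ.map j, v k := (Finset.sum_map _ j v).symm
      _ < ∑ k, v k := Finset.sum_lt_sum_of_subset (Finset.subset_univ _) (Finset.mem_univ k)
          (by simpa using hk) (hv k hk) fun l _ hl ↦ (hv l (by simpa using hl)).le
  · calc ∑ i, u i < ∑ i, v (j i) :=
          Finset.sum_lt_sum (fun i _ ↦ huv i) ⟨i, Finset.mem_univ i, hi⟩
      _ ≤ ∑ k, v k := sum_le_sum_of_embedding j (fun k hk ↦ (hv k hk).le) fun _ ↦ le_rfl

end EmbeddingSums

section SphericalAngle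

open Real

variable {a x : ℝ}

theorem strictMonoOn_cos_pi_div : StrictMonoOn (fun x : ℝ ↦ cos (π / x)) (Set.Ici 1) := by
  intro x (hx : 1 ≤ x) y (hy : 1 ≤ y) hxy
  have hyx : π / y < π / x := div_lt_div_of_pos_left pi_pos (by positivity) hxy
  exact cos_lt_cos_of_nonneg_of_le_pi (by positivity) (div_le_self pi_pos.le hx) hyx

theorem cos_pi_div_nonneg (hx : 2 ≤ x) : 0 ≤ cos (π / x) := by
  simpa using strictMonoOn_cos_pi_div.monotoneOn (Set.mem_Ici.2 one_le_two)
    (Set.mem_Ici.2 (by linarith)) hx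

theorem cos_pi_div_pos (hx : 2 < x) : 0 < cos (π / x) := by
  simpa using strictMonoOn_cos_pi_div (Set.mem_Ici.2 one_le_two) (Set.mem_Ici.2 (by linarith)) hx

theorem cos_pi_div_le_cos_half (hx : 1 ≤ x) (ha₀ : 0 ≤ a) (ha : a ≤ 2 * π / x) :
    cos (π / x) ≤ cos (a / 2) :=
  cos_le_cos_of_nonneg_of_le_pi (by positivity) (div_le_self pi_pos.le hx) <| by
    linarith [mul_div_assoc 2 π x]

/-- The interior angle of the regular spherical `x`-gon on the unit sphere with edges of length `a`.
The number of sides is allowed to be real, so that monotonicity in `x` makes sense on an interval.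
The formula has this meaning for `2 < x` and `0 < a ≤ 2π/x`; at `a = 0` it gives the angle of the
Euclidean regular `x`-gon. -/
noncomputable def sphericalAngle (x a : ℝ) : ℝ :=
  2 * arcsin (cos (π / x) / cos (a / 2))

theorem sphericalAngle_pos (hx : 2 < x) (ha₀ : 0 ≤ a) (ha : a ≤ 2 * π / x) :
    0 < sphericalAngle x a := by
  have hcos : 0 < cos (π / x) := cos_pi_div_pos hx
  have hratio : 0 < cos (π / x) / cos (a / 2) :=
    div_pos hcos (hcos.trans_le (cos_pi_div_le_cos_half (by linarith) ha₀ ha))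
  exact mul_pos two_pos (arcsin_pos.2 hratio)

theorem strictMonoOn_sphericalAngle (ha₀ : 0 ≤ a) :
    StrictMonoOn (fun x ↦ sphericalAngle x a) {x | 2 ≤ x ∧ a ≤ 2 * π / x} := by
  rintro x ⟨hx, -⟩ y ⟨-, hay⟩ hxy
  have hx₀ : 0 ≤ cos (π / x) := cos_pi_div_nonneg hx
  have hcos : cos (π / x) < cos (π / y) :=
    strictMonoOn_cos_pi_div (Set.mem_Ici.2 (by linarith)) (Set.mem_Ici.2 (by linarith)) hxy
  have hy₁ : cos (π / y) ≤ cos (a / 2) := cos_pi_div_le_cos_half (by linarith) ha₀ hay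
  have ha_pos : 0 < cos (a / 2) := (hx₀.trans_lt hcos).trans_le hy₁
  have harcsin : arcsin (cos (π / x) / cos (a / 2)) < arcsin (cos (π / y) / cos (a / 2)) :=
    arcsin_lt_arcsin (neg_one_lt_zero.le.trans (div_nonneg hx₀ ha_pos.le))
      (div_lt_div_of_pos_right hcos ha_pos) ((div_le_one ha_pos).2 hy₁)
  exact mul_lt_mul_of_pos_left harcsin two_pos

end SphericalAngle

section AngleDefect

open Real

variable {ι κ : Type*} [Fintype ι] [Fintype κ]

/-- The angle defect of regular spherical polygons with edges of length `a` around a common vertex.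
It extends `Kf` to an unordered finite family `f` of side numbers, which may be real. -/
noncomputable def angleDefect (f : ι → ℝ) (a : ℝ) : ℝ :=
  2 * π - ∑ i, sphericalAngle (f i) a

theorem Kf_eq_angleDefect {N : ℕ} (f : Fin N → ℕ) (a : ℝ) :
    Kf f a = angleDefect (fun i ↦ (f i : ℝ)) a :=
  rfl

theorem stmt2_general {f : ι → ℝ} {g : κ → ℝ} (hf : ∀ i, 2 ≤ f i) (hg : ∀ k, 2 < g k)
    (j : ι ↪ κ) (hemb : ∀ i, f i ≤ g (j i))
    {a : ℝ} (ha₀ : 0 ≤ a) (ha : ∀ k, a ≤ 2 * π / g k) :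
    angleDefect g a ≤ angleDefect f a ∧
      ((¬ Function.Surjective j ∨ ∃ i, f i < g (j i)) → angleDefect g a < angleDefect f a) := by
  have hpos : ∀ k, 0 < sphericalAngle (g k) a := fun k ↦ sphericalAngle_pos (hg k) ha₀ (ha k)
  have hg_mem : ∀ k, g k ∈ {x | 2 ≤ x ∧ a ≤ 2 * π / x} := fun k ↦ ⟨(hg k).le, ha k⟩
  have hf_mem : ∀ i, f i ∈ {x | 2 ≤ x ∧ a ≤ 2 * π / x} := fun i ↦
    have hfi : 0 < f i := two_pos.trans_le (hf i)
    ⟨hf i, (ha (j i)).trans (div_le_div_of_nonneg_left two_pi_pos.le hfi (hemb i))⟩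
  have hmono := strictMonoOn_sphericalAngle ha₀
  have hangle : ∀ i, sphericalAngle (f i) a ≤ sphericalAngle (g (j i)) a := fun i ↦
    hmono.monotoneOn (hf_mem i) (hg_mem (j i)) (hemb i)
  refine ⟨sub_le_sub_left (sum_le_sum_of_embedding j (fun k _ ↦ (hpos k).le) hangle) _,
    fun hstrict ↦ sub_lt_sub_left (sum_lt_sum_of_embedding j (fun k _ ↦ hpos k) hangle ?_) _⟩
  exact hstrict.imp_right fun ⟨i, hi⟩ ↦ ⟨i, hmono (hf_mem i) (hg_mem (j i)) hi⟩

end AngleDefect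

/-- Let `p = (f₁ ≤ … ≤ f_N)` and `q = (g₁ ≤ … ≤ g_M)` be vertex patterns with
`p ≤_emb q` (witnessed by a strictly monotone `j` with `fᵢ ≤ g_{jᵢ}`), and let
`a ∈ [0, 2π/g_M]`.  Then `K_a(p) ≥ K_a(q)`; if moreover the embedding is strict
(`N < M` or some `fᵢ < g_{jᵢ}`) then `K_a(p) > K_a(q)`. -/
theorem stmt2 (N M : ℕ) (hN : 3 ≤ N) (hM : 3 ≤ M)
    (f : Fin N → ℕ) (g : Fin M → ℕ)
    (hfmono : Monotone f) (hgmono : Monotone g)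
    (hf3 : ∀ i, 3 ≤ f i) (hg3 : ∀ i, 3 ≤ g i)
    (j : Fin N → Fin M) (hj : StrictMono j) (hemb : ∀ i, f i ≤ g (j i))
    (a : ℝ) (ha : a ∈ Set.Icc (0:ℝ) (2 * Real.pi / (g ⟨M - 1, by omega⟩ : ℝ))) :
    Kf g a ≤ Kf f a ∧
      ((N < M ∨ ∃ i, f i < g (j i)) → Kf g a < Kf f a) := by
  have hg : ∀ k, (2 : ℝ) < g k := fun k ↦ by exact_mod_cast hg3 k
  have hag : ∀ k, a ≤ 2 * Real.pi / g k := fun k ↦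
    have hk : g k ≤ g ⟨M - 1, by omega⟩ := hgmono (Fin.le_def.2 (Nat.le_sub_one_of_lt k.isLt))
    ha.2.trans <| div_le_div_of_nonneg_left Real.two_pi_pos.le (two_pos.trans (hg k))
      (Nat.cast_le.2 hk)
  have hj_not_surj : N < M → ¬ Function.Surjective j := fun hNM hsurj ↦
    hNM.not_ge (Fin.le_of_surjective j hsurj)
  obtain ⟨hle, hlt⟩ := stmt2_general (fun i ↦ by exact_mod_cast (Nat.le_succ 2).trans (hf3 i)) hg
    ⟨j, hj.injective⟩ (fun i ↦ Nat.cast_le.2 (hemb i)) ha.1 hag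
  simp only [Kf_eq_angleDefect]
  exact ⟨hle, fun hstrict ↦ hlt (hstrict.imp hj_not_surj fun ⟨i, hi⟩ ↦ ⟨i, Nat.cast_lt.2 hi⟩)⟩
end

section
/- For every admissible vertex pattern p we have a_c(p) ≤ arccos(−1/3), and equality holds if and only if p = (3,3,3). In particular, a_c((3,3,3)) = arccos(−1/3), i.e. arccos(−1/3) is the unique a ∈ (0, 2π/3] with 6·arcsin(1/(2·cos(a/2))) = 2π. -/
/-- The critical side-length `a_c(p) = max{a ∈ [0, 2π/f_N] : K_a(p) ≥ 0}` of a
vertex pattern `f : Fin (N+1) → ℕ`. -/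
noncomputable def ac {N : ℕ} (f : Fin (N + 1) → ℕ) : ℝ :=
  sSup {a : ℝ | a ∈ Set.Icc 0 (2 * Real.pi / (f (Fin.last N) : ℝ)) ∧ 0 ≤ Kf f a}

section

open Real Set

/-- Half the interior angle of the regular spherical `k`-gon with side-length `a`, the angle that
`Kf` sums over the faces. For `2π/k < a < π`, where no such polygon exists, `arcsin` clamps it to
`π/2`. -/
noncomputable def halfAngle (k : ℕ) (a : ℝ) : ℝ :=
  arcsin (cos (π / k) / cos (a / 2))

/-- The side-lengths in `[0, 2π/f_N]` at which the pattern has nonnegative angle defect; the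
critical side-length `ac f` is their supremum. -/
def nonnegDefectSides {n : ℕ} (f : Fin (n + 1) → ℕ) : Set ℝ :=
  {a | a ∈ Icc 0 (2 * π / (f (Fin.last n) : ℝ)) ∧ 0 ≤ Kf f a}

lemma cos_half_pos {a : ℝ} (ha : a ∈ Ioo (-π) π) : 0 < cos (a / 2) :=
  cos_pos_of_mem_Ioo ⟨by linarith [ha.1], by linarith [ha.2]⟩

lemma Icc_two_pi_div_subset_Ioo {k : ℕ} (hk : 3 ≤ k) : Icc 0 (2 * π / k) ⊆ Ioo (-π) π := by
  have hk' : (2 : ℝ) < k := by exact_mod_cast hk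
  have hlt : 2 * π / k < π := by
    rw [div_lt_iff₀ (by linarith), mul_comm]
    exact mul_lt_mul_of_pos_left hk' pi_pos
  exact fun a ha ↦ ⟨by linarith [ha.1, pi_pos], ha.2.trans_lt hlt⟩

lemma halfAngle_three (a : ℝ) : halfAngle 3 a = arcsin (1 / (2 * cos (a / 2))) := by
  rw [halfAngle, Nat.cast_ofNat, cos_pi_div_three, div_div]

lemma halfAngle_zero (k : ℕ) : halfAngle k 0 = π / 2 - π / k := by
  rw [halfAngle, zero_div, cos_zero, div_one, arcsin_eq_pi_div_two_sub_arccos,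
    arccos_cos (by positivity) (div_nat_le_self_of_nonnneg pi_pos.le k)]

lemma continuousOn_halfAngle (k : ℕ) : ContinuousOn (halfAngle k) (Ioo (-π) π) :=
  continuous_arcsin.comp_continuousOn <|
    continuousOn_const.div (by fun_prop) fun _ ha ↦ (cos_half_pos ha).ne'

lemma strictMonoOn_halfAngle {k : ℕ} (hk : 3 ≤ k) :
    StrictMonoOn (halfAngle k) (Icc 0 (2 * π / k)) := by
  intro a ha b hb hab
  have hpi (x : ℝ) (hx : x ∈ Icc 0 (2 * π / k)) : x / 2 ∈ Icc 0 π :=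
    ⟨by linarith [hx.1], by linarith [(Icc_two_pi_div_subset_Ioo hk hx).2, pi_pos]⟩
  have hb_pos : 0 < cos (b / 2) := cos_half_pos (Icc_two_pi_div_subset_Ioo hk hb)
  have hcos_lt : cos (b / 2) < cos (a / 2) :=
    strictAntiOn_cos (hpi a ha) (hpi b hb) (by linarith)
  have hhalf : 2 * π / k / 2 = π / k := by ring
  have hk_le : cos (π / k) ≤ cos (b / 2) :=
    cos_le_cos_of_nonneg_of_le_pi (hpi b hb).1 (div_nat_le_self_of_nonnneg pi_pos.le k)
      (by linarith [hb.2])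
  have hk_pos : 0 < cos (π / k) := by
    rw [← hhalf]
    exact cos_half_pos (Icc_two_pi_div_subset_Ioo hk ⟨by positivity, le_rfl⟩)
  refine strictMonoOn_arcsin ⟨?_, ?_⟩ ⟨?_, ?_⟩ (div_lt_div_of_pos_left hk_pos hb_pos hcos_lt)
  · exact neg_one_lt_zero.le.trans (div_pos hk_pos (hb_pos.trans hcos_lt)).le
  · exact (div_le_one (hb_pos.trans hcos_lt)).2 (hk_le.trans hcos_lt.le)
  · exact neg_one_lt_zero.le.trans (div_pos hk_pos hb_pos).le
  · exact (div_le_one hb_pos).2 hk_le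

lemma Kf_eq_sub_sum_halfAngle {N : ℕ} (f : Fin N → ℕ) (a : ℝ) :
    Kf f a = 2 * π - ∑ i, 2 * halfAngle (f i) a :=
  rfl

lemma Kf_const (N k : ℕ) (a : ℝ) :
    Kf (fun _ : Fin N ↦ k) a = 2 * π - N * (2 * halfAngle k a) := by
  simp only [Kf_eq_sub_sum_halfAngle, Finset.sum_const, Finset.card_univ, Fintype.card_fin,
    nsmul_eq_mul]

lemma Kf_zero {N : ℕ} (f : Fin N → ℕ) :
    Kf f 0 = 2 * π * (1 - (N : ℝ) / 2 + ∑ i, (1 : ℝ) / (f i : ℝ)) := by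
  have hterm (i : Fin N) : 2 * halfAngle (f i) 0 = π - 2 * π * (1 / (f i : ℝ)) := by
    rw [halfAngle_zero]
    ring
  simp only [Kf_eq_sub_sum_halfAngle, hterm, Finset.sum_sub_distrib, ← Finset.mul_sum,
    Finset.sum_const, Finset.card_univ, Fintype.card_fin, nsmul_eq_mul]
  ring

lemma continuousOn_Kf {N : ℕ} (f : Fin N → ℕ) : ContinuousOn (Kf f) (Ioo (-π) π) :=
  continuousOn_const.sub <| continuousOn_finsetSum _ fun i _ ↦
    continuousOn_const.mul (continuousOn_halfAngle (f i))

lemma isCompact_nonnegDefectSides {n : ℕ} {f : Fin (n + 1) → ℕ} (hlast : 3 ≤ f (Fin.last n)) :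
    IsCompact (nonnegDefectSides f) := by
  have hcont := (continuousOn_Kf f).mono (Icc_two_pi_div_subset_Ioo hlast)
  exact isCompact_Icc.of_isClosed_subset
    (hcont.preimage_isClosed_of_isClosed isClosed_Icc isClosed_Ici) inter_subset_left

lemma isGreatest_ac {n : ℕ} {f : Fin (n + 1) → ℕ} (hlast : 3 ≤ f (Fin.last n))
    (hK : 0 ≤ Kf f 0) : IsGreatest (nonnegDefectSides f) (ac f) :=
  (isCompact_nonnegDefectSides hlast).isGreatest_sSup ⟨0, ⟨le_rfl, by positivity⟩, hK⟩

lemma pi_div_two_lt_arccos_neg_third : π / 2 < arccos (-(1 / 3)) := by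
  rw [← not_le, arccos_le_pi_div_two]
  norm_num

lemma arccos_neg_third_mem_Icc : arccos (-(1 / 3)) ∈ Icc 0 (2 * π / (3 : ℕ)) := by
  have hcos : cos (2 * π / (3 : ℕ)) = -(1 / 2) := by
    rw [Nat.cast_ofNat, show 2 * π / 3 = π - π / 3 by ring, cos_pi_sub, cos_pi_div_three]
  refine ⟨arccos_nonneg _, ?_⟩
  rw [← arccos_cos (x := 2 * π / (3 : ℕ)) (by positivity)
    (Icc_two_pi_div_subset_Ioo le_rfl ⟨by positivity, le_rfl⟩).2.le, hcos]
  exact antitone_arccos (by norm_num)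

lemma cos_half_arccos_neg_third : cos (arccos (-(1 / 3)) / 2) = 1 / √3 := by
  rw [cos_half (by linarith [arccos_nonneg (-(1 / 3)), pi_pos]) (arccos_le_pi _),
    cos_arccos (by norm_num) (by norm_num), show (1 + -(1 / 3)) / 2 = (1 / 3 : ℝ) by norm_num,
    sqrt_div zero_le_one, sqrt_one]

lemma halfAngle_three_arccos_neg_third : halfAngle 3 (arccos (-(1 / 3))) = π / 3 := by
  have hsin : 1 / (2 * (1 / √3)) = sin (π / 3) := by
    rw [sin_pi_div_three, mul_one_div, one_div_div]
  rw [halfAngle_three, cos_half_arccos_neg_third, hsin,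
    arcsin_sin (by linarith [pi_pos]) (by linarith [pi_pos])]

lemma halfAngle_three_eq_pi_div_three_iff {a : ℝ} (ha : a ∈ Icc 0 (2 * π / (3 : ℕ))) :
    halfAngle 3 a = π / 3 ↔ a = arccos (-(1 / 3)) := by
  rw [← halfAngle_three_arccos_neg_third]
  exact (strictMonoOn_halfAngle le_rfl).injOn.eq_iff ha arccos_neg_third_mem_Icc

lemma forall_eq_three_of_pi_div_two_lt {n : ℕ} {f : Fin (n + 1) → ℕ} (h3 : ∀ i, 3 ≤ f i)
    (hmax : ∀ i, f i ≤ f (Fin.last n)) {a : ℝ} (ha : a ≤ 2 * π / (f (Fin.last n) : ℝ))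
    (hlt : π / 2 < a) : ∀ i, f i = 3 := by
  have hlast_pos : (0 : ℝ) < f (Fin.last n) := by exact_mod_cast three_pos.trans_le (h3 _)
  have hlast : (f (Fin.last n) : ℝ) < 4 := by
    have := (lt_div_iff₀ hlast_pos).1 (hlt.trans_le ha)
    nlinarith [pi_pos]
  intro i
  have : f (Fin.last n) < 4 := by exact_mod_cast hlast
  have := h3 i
  have := hmax i
  omega

lemma three_mem_nonnegDefectSides_iff {n : ℕ} {a : ℝ} :
    a ∈ nonnegDefectSides (fun _ : Fin (n + 1) ↦ 3) ↔
      a ∈ Icc 0 (2 * π / (3 : ℕ)) ∧ ((n : ℝ) + 1) * halfAngle 3 a ≤ π := by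
  have hK : 0 ≤ Kf (fun _ : Fin (n + 1) ↦ 3) a ↔ ((n : ℝ) + 1) * halfAngle 3 a ≤ π := by
    rw [Kf_const, Nat.cast_succ n]
    constructor <;> intro h <;> linarith
  exact and_congr_right fun _ ↦ hK

lemma eq_arccos_neg_third_and_forall_eq_three {n : ℕ} (hn : 2 ≤ n) {f : Fin (n + 1) → ℕ}
    (h3 : ∀ i, 3 ≤ f i) (hmax : ∀ i, f i ≤ f (Fin.last n)) {a : ℝ}
    (ha : a ∈ nonnegDefectSides f) (hle : arccos (-(1 / 3)) ≤ a) :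
    a = arccos (-(1 / 3)) ∧ n = 2 ∧ ∀ i, f i = 3 := by
  have hf : ∀ i, f i = 3 := forall_eq_three_of_pi_div_two_lt h3 hmax ha.1.2
    (pi_div_two_lt_arccos_neg_third.trans_le hle)
  obtain rfl : f = fun _ ↦ 3 := funext hf
  obtain ⟨hmem, hsum⟩ := three_mem_nonnegDefectSides_iff.1 ha
  have hangle : π / 3 ≤ halfAngle 3 a := by
    rw [← halfAngle_three_arccos_neg_third]
    exact (strictMonoOn_halfAngle le_rfl).monotoneOn arccos_neg_third_mem_Icc hmem hle
  have hn' : (2 : ℝ) ≤ n := by exact_mod_cast hn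
  have hangle_eq : halfAngle 3 a = π / 3 := by
    refine le_antisymm ?_ hangle
    nlinarith [pi_pos]
  have hn_le : (n : ℝ) ≤ 2 := by
    rw [hangle_eq] at hsum
    nlinarith [pi_pos]
  exact ⟨(halfAngle_three_eq_pi_div_three_iff hmem).1 hangle_eq,
    le_antisymm (by exact_mod_cast hn_le) hn, hf⟩

lemma arccos_neg_third_mem_nonnegDefectSides :
    arccos (-(1 / 3)) ∈ nonnegDefectSides (fun _ : Fin (2 + 1) ↦ 3) := by
  refine three_mem_nonnegDefectSides_iff.2 ⟨arccos_neg_third_mem_Icc, le_of_eq ?_⟩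
  rw [halfAngle_three_arccos_neg_third]
  push_cast
  ring

lemma six_mul_arcsin_eq_two_pi_iff {a : ℝ} (ha : a ∈ Ioc 0 (2 * π / 3)) :
    6 * arcsin (1 / (2 * cos (a / 2))) = 2 * π ↔ a = arccos (-(1 / 3)) := by
  have hmem : a ∈ Icc 0 (2 * π / (3 : ℕ)) := by exact_mod_cast Ioc_subset_Icc_self ha
  rw [← halfAngle_three_eq_pi_div_three_iff hmem, halfAngle_three]
  constructor <;> intro h <;> linarith

theorem stmt5_general {n : ℕ} (hn : 2 ≤ n) (f : Fin (n + 1) → ℕ) (h3 : ∀ i, 3 ≤ f i)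
    (hmax : ∀ i, f i ≤ f (Fin.last n))
    (hcurv : 0 ≤ 1 - ((n : ℝ) + 1) / 2 + ∑ i, (1 : ℝ) / (f i : ℝ)) :
    ac f ≤ arccos (-(1 / 3)) ∧ (ac f = arccos (-(1 / 3)) ↔ n = 2 ∧ ∀ i, f i = 3) := by
  have hK : 0 ≤ Kf f 0 := by
    rw [Kf_zero, Nat.cast_succ]
    exact mul_nonneg two_pi_pos.le hcurv
  have hac := isGreatest_ac (h3 _) hK
  have rigid := eq_arccos_neg_third_and_forall_eq_three hn h3 hmax hac.1
  refine ⟨?_, fun h ↦ (rigid h.ge).2, ?_⟩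
  · exact (le_total (ac f) _).elim id fun h ↦ (rigid h).1.le
  · rintro ⟨rfl, hf⟩
    obtain rfl : f = fun _ ↦ 3 := funext hf
    exact (rigid (hac.2 arccos_neg_third_mem_nonnegDefectSides)).1

end

/-- For every admissible vertex pattern `p` (length `≥ 3`, entries `≥ 3`, last entry
`≤ 41`, positive combinatorial curvature) we have `a_c(p) ≤ arccos(−1/3)`, with
equality iff `p = (3,3,3)`.  In particular `arccos(−1/3)` is the unique
`a ∈ (0, 2π/3]` with `6·arcsin(1/(2cos(a/2))) = 2π`. -/
theorem stmt5 :
    (∀ (n : ℕ), 2 ≤ n → ∀ f : Fin (n + 1) → ℕ, Monotone f → (∀ i, 3 ≤ f i) →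
      f (Fin.last n) ≤ 41 →
      0 < 1 - ((n : ℝ) + 1) / 2 + ∑ i, (1 : ℝ) / (f i : ℝ) →
      ac f ≤ Real.arccos (-(1/3)) ∧
        (ac f = Real.arccos (-(1/3)) ↔ n = 2 ∧ ∀ i, f i = 3)) ∧
    (Real.arccos (-(1/3)) ∈ Set.Ioc (0:ℝ) (2 * Real.pi / 3) ∧
      6 * Real.arcsin (1 / (2 * Real.cos (Real.arccos (-(1/3)) / 2))) = 2 * Real.pi ∧
      ∀ a ∈ Set.Ioc (0:ℝ) (2 * Real.pi / 3),
        6 * Real.arcsin (1 / (2 * Real.cos (a / 2))) = 2 * Real.pi →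
          a = Real.arccos (-(1/3))) := by
  have hmem : Real.arccos (-(1/3)) ∈ Set.Ioc (0:ℝ) (2 * Real.pi / 3) :=
    ⟨Real.pi_div_two_pos.trans pi_div_two_lt_arccos_neg_third,
      by exact_mod_cast arccos_neg_third_mem_Icc.2⟩
  exact ⟨fun n hn f hf h3 _ hcurv ↦ stmt5_general hn f h3 (fun i ↦ hf (Fin.le_last i)) hcurv.le,
    hmem, (six_mul_arcsin_eq_two_pi_iff hmem).2 rfl,
    fun a ha ↦ (six_mul_arcsin_eq_two_pi_iff ha).1⟩
end

section
/- One has π/3 < arctan 2, and the critical area of the Johnson solid J16 (10 spherical triangles and 5 spherical squares of side length π/3) satisfies 10·(3·β(3,π/3) − π) + 5·(4·β(4,π/3) − 2π) = 20·arcsin(√3/3), and 4π − 0.2568 < 20·arcsin(√3/3) < 4π − 0.2567. -/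
/-- The interior angle of the regular spherical `n`-gon of side length `a`
in the unit sphere: `β(n,a) = 2·arcsin(cos(π/n)/cos(a/2))`. -/
noncomputable def beta (n : ℕ) (a : ℝ) : ℝ :=
  2 * Real.arcsin (Real.cos (Real.pi / (n : ℝ)) / Real.cos (a / 2))

/-!
The solid has ten vertices of type `(3,3,4,4)`, and `π/3` is the side length at which the angles
there close up: `cos² (π/3) + cos² (π/4) = cos² (π/6)`, so the half-angles of triangle and square
are complementary and `β(3,π/3) + β(4,π/3) = π`. This removes the square angle from the total area,
leaving `10 β(3,π/3) = 20 arcsin (√3/3)`. The double-angle formula turns the latter into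
`10 arccos (1/3) = 5π - 10 arcsin (1/3)`, and `arcsin (1/3)` is located by evaluating partial sums
of the alternating sine series.
-/

open Real
open scoped Nat

section Arcsin

theorem two_mul_arcsin_eq_arccos {x : ℝ} (hx₀ : 0 ≤ x) (hx₁ : x ≤ 1) :
    2 * arcsin x = arccos (1 - 2 * x ^ 2) := by
  have hsin : sin (arcsin x) = x := sin_arcsin (by linarith) hx₁
  symm
  apply arccos_eq_of_eq_cos
  · linarith [arcsin_nonneg.2 hx₀]
  · linarith [arcsin_le_pi_div_two x]
  · rw [cos_two_mul, cos_sq', hsin]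
    ring

theorem arcsin_add_arcsin_eq_pi_div_two {x y : ℝ} (hx : 0 ≤ x) (hy : 0 ≤ y)
    (h : x ^ 2 + y ^ 2 = 1) : arcsin x + arcsin y = π / 2 := by
  have hxy : √(1 - x ^ 2) = y := by rw [← h, add_sub_cancel_left, sqrt_sq hy]
  rw [← hxy, ← arccos_eq_arcsin hx, arccos_eq_pi_div_two_sub_arcsin, add_sub_cancel]

end Arcsin

section SineSeries

variable {x : ℝ}

theorem antitone_sin_series_terms (hx : 0 ≤ x) (hx6 : x ^ 2 ≤ 6) :
    Antitone fun n : ℕ ↦ x ^ (2 * n + 1) / (2 * n + 1)! := by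
  refine antitone_nat_of_succ_le fun n ↦ ?_
  have hn : (6 : ℝ) ≤ (2 * n + 3) * (2 * n + 2) := by nlinarith [n.cast_nonneg (α := ℝ)]
  have hfac : ((2 * (n + 1) + 1)! : ℝ) = (2 * n + 3) * (2 * n + 2) * (2 * n + 1)! := by
    rw [show 2 * (n + 1) + 1 = 2 * n + 1 + 1 + 1 by ring, Nat.factorial_succ, Nat.factorial_succ]
    push_cast
    ring
  calc x ^ (2 * (n + 1) + 1) / (2 * (n + 1) + 1)!
      = x ^ 2 / ((2 * n + 3) * (2 * n + 2)) * (x ^ (2 * n + 1) / (2 * n + 1)!) := by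
        rw [hfac, div_mul_div_comm, ← pow_add]
        ring_nf
    _ ≤ x ^ (2 * n + 1) / (2 * n + 1)! :=
        mul_le_of_le_one_left (by positivity) (div_le_one_of_le₀ (hx6.trans hn) (by positivity))

theorem tendsto_sin_series (x : ℝ) :
    Filter.Tendsto (fun n ↦ ∑ i ∈ Finset.range n, (-1) ^ i * (x ^ (2 * i + 1) / (2 * i + 1)!))
      Filter.atTop (nhds (sin x)) := by
  simpa only [mul_div_assoc] using (hasSum_sin x).tendsto_sum_nat

theorem sin_series_even_le_sin (hx : 0 ≤ x) (hx6 : x ^ 2 ≤ 6) (k : ℕ) :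
    ∑ i ∈ Finset.range (2 * k), (-1) ^ i * (x ^ (2 * i + 1) / (2 * i + 1)!) ≤ sin x :=
  (antitone_sin_series_terms hx hx6).alternating_series_le_tendsto (tendsto_sin_series x) k

theorem sin_le_sin_series_odd (hx : 0 ≤ x) (hx6 : x ^ 2 ≤ 6) (k : ℕ) :
    sin x ≤ ∑ i ∈ Finset.range (2 * k + 1), (-1) ^ i * (x ^ (2 * i + 1) / (2 * i + 1)!) :=
  (antitone_sin_series_terms hx hx6).tendsto_le_alternating_series (tendsto_sin_series x) k

end SineSeries

section ArcsinOneThird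

-- The decimals are chosen so that `5π - 10 arcsin (1/3)` lies between `4π - 0.2568` and
-- `4π - 0.2567`, with room for six-digit bounds on `π`.
theorem arcsin_one_third_gt : 0.33983 < arcsin (1 / 3) := by
  rw [lt_arcsin_iff_sin_lt' ⟨by linarith [pi_pos], by linarith [pi_gt_three]⟩]
  refine (sin_le_sin_series_odd (by norm_num) (by norm_num) 1).trans_lt ?_
  norm_num [Finset.sum_range_succ, Nat.factorial]

theorem arcsin_one_third_lt : arcsin (1 / 3) < 0.339839 := by
  rw [arcsin_lt_iff_lt_sin' ⟨by linarith [pi_pos], by linarith [pi_gt_three]⟩]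
  refine lt_of_lt_of_le ?_ (sin_series_even_le_sin (by norm_num) (by norm_num) 2)
  norm_num [Finset.sum_range_succ, Nat.factorial]

end ArcsinOneThird

section InteriorAngle

theorem cos_pi_div_nat_nonneg {n : ℕ} (hn : 2 ≤ n) : 0 ≤ cos (π / n) := by
  have hn' : (2 : ℝ) ≤ n := mod_cast hn
  exact cos_nonneg_of_neg_pi_div_two_le_of_le
    ((neg_nonpos.2 pi_div_two_pos.le).trans (by positivity)) (by gcongr)

theorem beta_add_beta_eq_pi {m n : ℕ} {a : ℝ} (hm : 2 ≤ m) (hn : 2 ≤ n) (ha : 0 < cos (a / 2))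
    (h : cos (π / m) ^ 2 + cos (π / n) ^ 2 = cos (a / 2) ^ 2) : beta m a + beta n a = π := by
  have hsq : (cos (π / m) / cos (a / 2)) ^ 2 + (cos (π / n) / cos (a / 2)) ^ 2 = 1 := by
    rw [div_pow, div_pow, ← add_div, h, div_self (pow_ne_zero 2 ha.ne')]
  have hcompl := arcsin_add_arcsin_eq_pi_div_two
    (div_nonneg (cos_pi_div_nat_nonneg hm) ha.le) (div_nonneg (cos_pi_div_nat_nonneg hn) ha.le) hsq
  unfold beta
  linarith

theorem cos_pi_div_three_div_two : cos (π / 3 / 2) = √3 / 2 := by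
  rw [div_div, ← cos_pi_div_six]
  norm_num

theorem beta_three_pi_div_three : beta 3 (π / 3) = 2 * arcsin (√3 / 3) := by
  have hratio : (1 / 2 : ℝ) / (√3 / 2) = √3 / 3 := by
    rw [div_div_div_cancel_right₀ two_ne_zero, sqrt_div_self']
  rw [beta, Nat.cast_ofNat, cos_pi_div_three, cos_pi_div_three_div_two, hratio]

theorem beta_three_add_beta_four_pi_div_three : beta 3 (π / 3) + beta 4 (π / 3) = π := by
  refine beta_add_beta_eq_pi (by norm_num) (by norm_num) ?_ ?_
  · rw [cos_pi_div_three_div_two]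
    positivity
  · rw [Nat.cast_ofNat, Nat.cast_ofNat, cos_pi_div_three, cos_pi_div_four,
      cos_pi_div_three_div_two]
    norm_num [div_pow]

end InteriorAngle

theorem pi_div_three_lt_arctan_two : π / 3 < arctan 2 := by
  have hsqrt : √3 < 2 := (sqrt_lt' two_pos).2 (by norm_num)
  rw [← arctan_sqrt_three]
  exact arctan_strictMono hsqrt

theorem two_mul_arcsin_sqrt_three_div_three : 2 * arcsin (√3 / 3) = π / 2 - arcsin (1 / 3) := by
  have hle : √3 / 3 ≤ 1 := (div_le_one three_pos).2 (sqrt_le_iff.2 (by norm_num))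
  rw [two_mul_arcsin_eq_arccos (by positivity) hle, div_pow, sq_sqrt zero_le_three,
    arccos_eq_pi_div_two_sub_arcsin]
  norm_num

/-- One has π/3 < arctan 2, and the critical area of the Johnson solid J16
(10 spherical triangles and 5 spherical squares of side length π/3) satisfies
10·(3·β(3,π/3) − π) + 5·(4·β(4,π/3) − 2π) = 20·arcsin(√3/3), and
4π − 0.2568 < 20·arcsin(√3/3) < 4π − 0.2567. -/
theorem stmt14 :
    Real.pi / 3 < Real.arctan 2 ∧
    10 * (3 * beta 3 (Real.pi / 3) - Real.pi) +
      5 * (4 * beta 4 (Real.pi / 3) - 2 * Real.pi) = 20 * Real.arcsin (Real.sqrt 3 / 3) ∧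
    4 * Real.pi - 2568 / 10000 < 20 * Real.arcsin (Real.sqrt 3 / 3) ∧
    20 * Real.arcsin (Real.sqrt 3 / 3) < 4 * Real.pi - 2567 / 10000 := by
  have harcsin := two_mul_arcsin_sqrt_three_div_three
  refine ⟨pi_div_three_lt_arctan_two, ?_, ?_, ?_⟩
  · linear_combination
      20 * beta_three_add_beta_four_pi_div_three + 10 * beta_three_pi_div_three
  · linarith [arcsin_one_third_lt, pi_gt_d6]
  · linarith [arcsin_one_third_gt, pi_lt_d6]
end
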